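/- Let m ≥ 1, let M ∈ ℝ^{m×m} be a matrix with all entries nonnegative, let λ ∈ ℝ, and set L = λ·I_m − M. Suppose u, v ∈ ℝ^m are column vectors with all entries strictly positive satisfying uᵀL = 0 and Lv = 0. Suppose further that there is a nonempty proper subset J of {1,2,…,m} such that M_{i,j} = 0 for all i ∉ J and j ∈ J. Then the kernel of L (as a linear map ℝ^m → ℝ^m) has dimension at least 2. -/

import Mathlib

/-!
Let `w` be the null vector `v` with its coordinates outside `J` set to zero. The entries `L i j`
with `i ∈ J` and `j ∉ J` are nonpositive, so deleting those coordinates can only increase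
`(L v) i` for `i ∈ J`, and for `i ∉ J` the vanishing block gives `(L w) i = 0`. Hence `L w ≥ 0`,
while `u ⬝ (L w) = (u L) ⬝ w = 0` with `u > 0`, so `L w = 0`. Since `v` is nonzero both on `J` and
off `J`, the null vectors `v` and `w` are linearly independent.
-/

open Matrix Module

section MulVec

variable {m n R : Type*}

lemma eq_zero_of_dotProduct_eq_zero_of_pos [Fintype m] [Semiring R] [PartialOrder R]
    [IsStrictOrderedRing R] {u w : m → R} (hu : ∀ i, 0 < u i) (hw : 0 ≤ w) (huw : u ⬝ᵥ w = 0) :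
    w = 0 := by
  have hterm : ∀ i, u i * w i = 0 := by
    simpa using (Finset.sum_eq_zero_iff_of_nonneg fun i _ ↦ mul_nonneg (hu i).le (hw i)).1 huw
  funext i
  exact ((hw i).eq_of_not_lt fun hi ↦ (mul_pos (hu i) hi).ne' (hterm i)).symm

lemma mulVec_eq_zero_of_nonneg_of_vecMul_eq_zero [Fintype m] [Fintype n] [Semiring R]
    [PartialOrder R] [IsStrictOrderedRing R] {L : Matrix m n R} {u : m → R} {w : n → R}
    (hu : ∀ i, 0 < u i) (huL : u ᵥ* L = 0) (hLw : 0 ≤ L *ᵥ w) : L *ᵥ w = 0 :=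
  eq_zero_of_dotProduct_eq_zero_of_pos hu hLw <| by
    rw [dotProduct_mulVec, huL, zero_dotProduct]

lemma mulVec_indicator_apply_eq_zero [Fintype n] [NonUnitalNonAssocSemiring R] {L : Matrix m n R}
    {s : Set n} {i : m} (hL : ∀ j ∈ s, L i j = 0) (v : n → R) : (L *ᵥ s.indicator v) i = 0 :=
  Finset.sum_eq_zero fun j _ ↦ by
    by_cases hj : j ∈ s <;> simp [hj, hL]

lemma mulVec_indicator_apply_nonpos [Fintype n] [Ring R] [PartialOrder R] [IsOrderedRing R]
    {L : Matrix m n R} {v : n → R} {s : Set n} {i : m} (hL : ∀ j ∈ s, L i j ≤ 0)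
    (hv : ∀ j ∈ s, 0 ≤ v j) : (L *ᵥ s.indicator v) i ≤ 0 :=
  Finset.sum_nonpos fun j _ ↦ by
    by_cases hj : j ∈ s
    · rw [Set.indicator_of_mem hj]
      exact mul_nonpos_of_nonpos_of_nonneg (hL j hj) (hv j hj)
    · rw [Set.indicator_of_notMem hj, mul_zero]

lemma mulVec_indicator_nonneg [Fintype n] [Ring R] [PartialOrder R] [IsOrderedRing R]
    {L : Matrix n n R} {v : n → R} {s : Set n} (hL : ∀ i ∈ s, ∀ j ∉ s, L i j ≤ 0)
    (hs : ∀ i ∉ s, ∀ j ∈ s, L i j = 0) (hv : ∀ j ∉ s, 0 ≤ v j)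
    (hLv : ∀ i ∈ s, 0 ≤ (L *ᵥ v) i) : 0 ≤ L *ᵥ s.indicator v := by
  intro i
  by_cases hi : i ∈ s
  · have hcompl : (L *ᵥ sᶜ.indicator v) i ≤ 0 := mulVec_indicator_apply_nonpos (hL i hi) hv
    calc
      0 ≤ (L *ᵥ v) i := hLv i hi
      _ = (L *ᵥ s.indicator v) i + (L *ᵥ sᶜ.indicator v) i := by
        rw [← Pi.add_apply, ← mulVec_add, Set.indicator_self_add_compl]
      _ ≤ (L *ᵥ s.indicator v) i := add_le_of_nonpos_right hcompl
  · exact (mulVec_indicator_apply_eq_zero (hs i hi) v).ge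

end MulVec

lemma linearIndependent_pair_indicator {ι R : Type*} [Ring R] [NoZeroDivisors R] {v : ι → R}
    {s : Set ι} (hs : ∃ a ∈ s, v a ≠ 0) (hsc : ∃ b ∉ s, v b ≠ 0) :
    LinearIndependent R ![v, s.indicator v] := by
  obtain ⟨a, ha, hva⟩ := hs
  obtain ⟨b, hb, hvb⟩ := hsc
  refine LinearIndependent.pair_iff.2 fun c d h ↦ ?_
  have hc : c = 0 := by simpa [hb, hvb] using congrFun h b
  have hd : d = 0 := by simpa [hc, ha, hva] using congrFun h a
  exact ⟨hc, hd⟩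

theorem stmt4_general {n K : Type*} [Fintype n] [Field K] [LinearOrder K] [IsStrictOrderedRing K]
    {L : Matrix n n K} {u v : n → K} {J : Set n} (hL : ∀ i ∈ J, ∀ j ∉ J, L i j ≤ 0)
    (hJ : ∀ i ∉ J, ∀ j ∈ J, L i j = 0) (hu : ∀ i, 0 < u i) (hv : ∀ j ∉ J, 0 ≤ v j)
    (huL : u ᵥ* L = 0) (hLv : L *ᵥ v = 0) (hvJ : ∃ j ∈ J, v j ≠ 0) (hvJc : ∃ j ∉ J, v j ≠ 0) :
    2 ≤ finrank K (LinearMap.ker L.mulVecLin) := by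
  have hLw : L *ᵥ J.indicator v = 0 :=
    mulVec_eq_zero_of_nonneg_of_vecMul_eq_zero hu huL <|
      mulVec_indicator_nonneg hL hJ hv fun i _ ↦ (congrFun hLv i).ge
  have hspan : Submodule.span K (Set.range ![v, J.indicator v]) ≤ LinearMap.ker L.mulVecLin := by
    simp [Submodule.span_le, Set.insert_subset_iff, hLv, hLw]
  calc
    2 = finrank K (Submodule.span K (Set.range ![v, J.indicator v])) :=
      (finrank_span_eq_card (linearIndependent_pair_indicator hvJ hvJc)).symm
    _ ≤ finrank K (LinearMap.ker L.mulVecLin) := Submodule.finrank_mono hspan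

/-- Lemma 6.2 of the paper. Let `M ∈ ℝ^{m×m}` be nonnegative,
`L = λ·I − M`, and suppose `u, v > 0` satisfy `uᵀL = 0` and `Lv = 0`.
If there is a nonempty proper subset `J ⊆ {1,…,m}` with `M_{i,j} = 0` for all
`i ∉ J`, `j ∈ J`, then the kernel of `L` has dimension at least `2`. -/
theorem stmt4 (m : ℕ) (hm : 1 ≤ m) (M : Matrix (Fin m) (Fin m) ℝ)
    (hM : ∀ i j, 0 ≤ M i j) (lam : ℝ)
    (L : Matrix (Fin m) (Fin m) ℝ)
    (hL : L = lam • (1 : Matrix (Fin m) (Fin m) ℝ) - M)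
    (u v : Fin m → ℝ) (hu : ∀ i, 0 < u i) (hv : ∀ i, 0 < v i)
    (huL : Matrix.vecMul u L = 0) (hLv : L.mulVec v = 0)
    (J : Finset (Fin m)) (hJne : J.Nonempty) (hJprop : J ≠ Finset.univ)
    (hJ : ∀ i ∉ J, ∀ j ∈ J, M i j = 0) :
    2 ≤ Module.finrank ℝ (LinearMap.ker (Matrix.mulVecLin L)) := by
  have hoff : ∀ i j, i ≠ j → L i j = -M i j := fun i j hij ↦ by simp [hL, one_apply_ne hij]
  have hJc : ∃ j, j ∉ J := by simpa [Finset.eq_univ_iff_forall] using hJprop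
  exact stmt4_general (J := J) (by grind) (by grind) hu
    (fun j _ ↦ (hv j).le) huL hLv (hJne.imp fun j hj ↦ ⟨hj, (hv j).ne'⟩)
    (hJc.imp fun j hj ↦ ⟨hj, (hv j).ne'⟩)
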